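/- Let p be an odd prime, l a positive integer, q = p^l, and let F be the finite field with q elements (in Lean, GaloisField p l). Let ν ≥ 1 and r ≥ 0 be integers, let n′ be an odd positive integer not divisible by p, and set n = 2^ν·p^r·n′. Assume 2^{ν+1} does not divide p^l + 1. Then the number of polynomials g over F such that there exists a polynomial h with X^n + 1 = g·h and g = C (h.coeff 0)⁻¹ * h.reverse equals (p^r + 1)^t, where t is the natural number satisfying 2t = Σ_{d ∣ n′} φ(2^{ν+1}·d) / ord_{2^{ν+1}·d}(p^l), the sum running over all positive divisors d of n′, φ denoting Euler's totient function, and ord_{m}(p^l) denoting the multiplicative order of p^l modulo m (in Lean, orderOf of the element p^l of ZMod m). -/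

import Mathlib

open Polynomial

/-!
The monic reciprocal `h ↦ h*` is multiplicative, so the equation `g = h*` in `X ^ n + 1 = g * h`
is a condition on exponents of irreducible factors. Writing `n = 2 ^ ν * p ^ r * n'`, we have
`X ^ n + 1 = P ^ p ^ r` with `P = X ^ (2 ^ ν * n') + 1` squarefree and self-reciprocal, so `*`
permutes the monic irreducible factors `f` of `P`. If `e f` is the exponent of `f` in `g`, then
`g = h*` says `e f + e f* = p ^ r`. No `f` is its own reciprocal: otherwise Frobenius would send a
root `x` of `f` to `x⁻¹`, so that `x ^ (q ^ i + 1) = 1` for some `i`, whereas the order of `x` is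
divisible by `2 ^ (ν + 1)`, and `2 ^ (ν + 1) ∣ q ^ i + 1` forces `2 ^ (ν + 1) ∣ q + 1`. The factors
therefore form `t` pairs `{f, f*}`, and for each pair one exponent is chosen freely in
`{0, …, p ^ r}`. Finally `P` is the product of the cyclotomic polynomials of index
`2 ^ (ν + 1) * d` for `d ∣ n'`, which gives the number `2 * t` of factors.
-/

open UniqueFactorizationMonoid Function

section Involution

variable {α β : Type*} {σ : α → α} {τ : β → β}

lemma exists_transversal_of_involutive (hσ : Involutive σ) (hfix : ∀ a, σ a ≠ a) :
    ∃ s : Set α, ∀ a, σ a ∈ s ↔ a ∉ s := by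
  obtain ⟨_, -⟩ := exists_wellFoundedLT α
  refine ⟨{a | a < σ a}, fun a => ?_⟩
  rw [Set.mem_ofPred_eq, Set.mem_ofPred_eq, hσ a, not_lt]
  exact (hfix a).le_iff_lt.symm

lemma card_eq_two_mul_ncard_transversal [Finite α] (hσ : Involutive σ) {s : Set α}
    (hs : ∀ a, σ a ∈ s ↔ a ∉ s) : Nat.card α = 2 * s.ncard := by
  have hcompl : σ ⁻¹' s = sᶜ := Set.ext hs
  rw [← Set.ncard_add_ncard_compl s, ← hcompl,
    Set.ncard_preimage_of_injective_subset_range hσ.injective (by simp [hσ.surjective.range_eq]),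
    two_mul]

/-- Restriction to a transversal `s` of the orbits of a fixed-point-free involution `σ` identifies
the maps intertwining `σ` with an involution `τ` with arbitrary maps on `s`. -/
noncomputable def semiconjEquivTransversal (hσ : Involutive σ) (hτ : Involutive τ) {s : Set α}
    (hs : ∀ a, σ a ∈ s ↔ a ∉ s) : {e : α → β // Semiconj e σ τ} ≃ (s → β) where
  toFun e a := e.1 a
  invFun c := by
    classical
    exact ⟨fun a => if h : a ∈ s then c ⟨a, h⟩ else τ (c ⟨σ a, (hs a).mpr h⟩), fun a => by
      by_cases h : a ∈ s
      · have h' : σ a ∉ s := fun h' => (hs a).mp h' h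
        simp [h, h', hσ a]
      · simp [h, (hs a).mpr h, hτ _]⟩
  left_inv e := by
    ext a
    by_cases h : a ∈ s
    · simp [h]
    · simp [h, e.2 a, hτ _]
  right_inv c := by
    ext a
    simp

lemma card_semiconj_involutive [Finite α] (hσ : Involutive σ) (hfix : ∀ a, σ a ≠ a)
    (hτ : Involutive τ) {t : ℕ} (ht : Nat.card α = 2 * t) :
    Nat.card {e : α → β // Semiconj e σ τ} = Nat.card β ^ t := by
  obtain ⟨s, hs⟩ := exists_transversal_of_involutive hσ hfix
  have hst : s.ncard = t := by
    have := card_eq_two_mul_ncard_transversal hσ hs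
    omega
  rw [Nat.card_congr (semiconjEquivTransversal hσ hτ hs), Nat.card_fun, Nat.card_coe_set_eq, hst]

end Involution

section PrimeProducts

variable {M ι : Type*} [CommMonoidWithZero M] [IsCancelMulZero M] {f : ι → M}

lemma exists_associated_prod_pow_of_mul_eq_prod_pow (hf : ∀ i, Prime (f i)) (n : ι → ℕ)
    (s : Finset ι) {a b : M} (hab : a * b = ∏ i ∈ s, f i ^ n i) :
    ∃ j k : ι → ℕ, (∀ i ∈ s, j i + k i = n i) ∧
      Associated a (∏ i ∈ s, f i ^ j i) ∧ Associated b (∏ i ∈ s, f i ^ k i) := by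
  classical
  induction s using Finset.induction_on generalizing a b with
  | empty =>
    have hab : a * b = 1 := by simpa using hab
    exact ⟨0, 0, by simp, by simpa using .of_mul_eq_one _ hab,
      by simpa using .of_mul_eq_one_right _ hab⟩
  | insert i s hi ih =>
    rw [Finset.prod_insert hi, mul_comm (f i ^ n i)] at hab
    obtain ⟨ji, ki, a', b', hn, hab', rfl, rfl⟩ := mul_eq_mul_prime_pow (hf i) hab
    obtain ⟨j, k, hjk, ha, hb⟩ := ih hab'.symm
    have hprod (e : ι → ℕ) (m : ℕ) :
        ∏ x ∈ insert i s, f x ^ update e i m x = (∏ x ∈ s, f x ^ e x) * f i ^ m := by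
      rw [Finset.prod_insert hi, update_self, mul_comm]
      congr 1
      exact Finset.prod_congr rfl fun x hx => by
        rw [update_of_ne (ne_of_mem_of_not_mem hx hi)]
    refine ⟨update j i ji, update k i ki, fun x hx => ?_, ?_, ?_⟩
    · rcases eq_or_ne x i with rfl | hxi
      · simpa using hn
      · simpa [hxi] using hjk x (Finset.mem_of_mem_insert_of_ne hx hxi)
    · rw [hprod]
      exact ha.mul_right _
    · rw [hprod]
      exact hb.mul_right _

lemma emultiplicity_prod_pow [Fintype ι] (hf : ∀ i, Prime (f i))
    (hrel : Pairwise (IsRelPrime on f)) (e : ι → ℕ) (i : ι) :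
    emultiplicity (f i) (∏ j, f j ^ e j) = e i := by
  rw [Finset.emultiplicity_prod (hf i), Finset.sum_eq_single i]
  · exact emultiplicity_pow_self_of_prime (hf i) (e i)
  · intro j _ hji
    refine emultiplicity_eq_zero.mpr fun hdvd => (hf i).not_isUnit ?_
    exact hrel hji.symm dvd_rfl ((hf i).dvd_of_dvd_pow hdvd)
  · simp

lemma exponents_eq_of_associated_prod_pow [Fintype ι] (hf : ∀ i, Prime (f i))
    (hrel : Pairwise (IsRelPrime on f)) {d e : ι → ℕ}
    (h : Associated (∏ i, f i ^ d i) (∏ i, f i ^ e i)) : d = e := by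
  ext i
  have := emultiplicity_eq_of_associated_right (a := f i) h
  rw [emultiplicity_prod_pow hf hrel, emultiplicity_prod_pow hf hrel] at this
  exact_mod_cast this

end PrimeProducts

lemma card_primeFactors_prod {M ι : Type*} [CommMonoidWithZero M] [NormalizationMonoid M]
    [UniqueFactorizationMonoid M] {s : Finset ι} {f : ι → M} (hsq : Squarefree (∏ i ∈ s, f i)) :
    (primeFactors (∏ i ∈ s, f i)).card = ∑ i ∈ s, (primeFactors (f i)).card := by
  classical
  induction s using Finset.induction_on with
  | empty => simp
  | insert i s hi ih =>
    rw [Finset.prod_insert hi] at hsq ⊢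
    obtain ⟨hrel, -, hs⟩ := squarefree_mul_iff.mp hsq
    rw [primeFactors_mul_eq_disjUnion hrel, Finset.card_disjUnion, ih hs, Finset.sum_insert hi]

section MonicReciprocal

variable {F : Type*} [Field F] {f g : F[X]}

/-- The monic reciprocal polynomial `h* = h(0)⁻¹ X ^ deg h * h(1 / X)`, as a multiplicative map.
It takes the junk value `0` when `h(0) = 0`. -/
noncomputable def monicReciprocal : F[X] →*₀ F[X] where
  toFun h := C (h.coeff 0)⁻¹ * h.reverse
  map_zero' := by simp
  map_one' := by simpa using reverse_C (1 : F)
  map_mul' f g := by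
    simp only [mul_coeff_zero, mul_inv, C_mul, reverse_mul_of_domain]
    ring

lemma monicReciprocal_apply (f : F[X]) :
    monicReciprocal f = C (f.coeff 0)⁻¹ * f.reverse := rfl

lemma monicReciprocal_eq_of_associated (h : Associated f g) :
    monicReciprocal f = monicReciprocal g := by
  obtain ⟨u, rfl⟩ := h
  obtain ⟨c, hc, hcu⟩ := Polynomial.isUnit_iff.mp u.isUnit
  have hu : monicReciprocal (u : F[X]) = 1 := by
    rw [← hcu, monicReciprocal_apply, coeff_C_zero, reverse_C, ← C_mul,
      inv_mul_cancel₀ hc.ne_zero, C_1]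
  rw [map_mul, hu, mul_one]

lemma associated_monicReciprocal_reverse (hf : f.coeff 0 ≠ 0) :
    Associated (monicReciprocal f) f.reverse :=
  associated_unit_mul_left _ _ (isUnit_C.mpr (inv_ne_zero hf).isUnit)

lemma mirror_eq_reverse (hf : f.coeff 0 ≠ 0) : f.mirror = f.reverse := by
  rw [mirror, natTrailingDegree_eq_zero_of_constantCoeff_ne_zero hf, pow_zero, mul_one]

lemma coeff_zero_reverse_ne_zero (hf : f ≠ 0) : f.reverse.coeff 0 ≠ 0 := by
  rwa [coeff_zero_reverse, leadingCoeff_ne_zero]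

lemma reverse_reverse (hf : f.coeff 0 ≠ 0) : f.reverse.reverse = f := by
  have hf0 : f ≠ 0 := by rintro rfl; simp at hf
  rw [← mirror_eq_reverse (coeff_zero_reverse_ne_zero hf0), ← mirror_eq_reverse hf, mirror_mirror]

lemma isUnit_reverse_iff (hf : f.coeff 0 ≠ 0) : IsUnit f.reverse ↔ IsUnit f := by
  have hf0 : f ≠ 0 := by rintro rfl; simp at hf
  rw [← mirror_eq_reverse hf, Polynomial.isUnit_iff_degree_eq_zero,
    Polynomial.isUnit_iff_degree_eq_zero, degree_eq_natDegree hf0,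
    degree_eq_natDegree (mirror_eq_zero.not.mpr hf0), mirror_natDegree]

lemma irreducible_reverse (hf : f.coeff 0 ≠ 0) (hi : Irreducible f) : Irreducible f.reverse where
  not_isUnit := (isUnit_reverse_iff hf).not.mpr hi.not_isUnit
  isUnit_or_isUnit a b hab := by
    have hab0 : a.coeff 0 * b.coeff 0 ≠ 0 := by
      rw [← mul_coeff_zero, ← hab]
      exact coeff_zero_reverse_ne_zero hi.ne_zero
    have hfab : f = a.reverse * b.reverse := by
      rw [← reverse_mul_of_domain, ← hab, reverse_reverse hf]
    rw [← isUnit_reverse_iff (left_ne_zero_of_mul hab0),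
      ← isUnit_reverse_iff (right_ne_zero_of_mul hab0)]
    exact hi.isUnit_or_isUnit hfab

lemma monic_monicReciprocal (hf : f.coeff 0 ≠ 0) : (monicReciprocal f).Monic := by
  rw [Monic, monicReciprocal_apply, leadingCoeff_mul, leadingCoeff_C, reverse_leadingCoeff,
    trailingCoeff, natTrailingDegree_eq_zero_of_constantCoeff_ne_zero hf, inv_mul_cancel₀ hf]

lemma irreducible_monicReciprocal (hf : f.coeff 0 ≠ 0) (hi : Irreducible f) :
    Irreducible (monicReciprocal f) :=
  (associated_monicReciprocal_reverse hf).symm.irreducible (irreducible_reverse hf hi)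

lemma monicReciprocal_monicReciprocal (hf : f.coeff 0 ≠ 0) (hm : f.Monic) :
    monicReciprocal (monicReciprocal f) = f := by
  rw [monicReciprocal_eq_of_associated (associated_monicReciprocal_reverse hf),
    monicReciprocal_apply, coeff_zero_reverse, hm.leadingCoeff, reverse_reverse hf, inv_one, C_1,
    one_mul]

lemma monicReciprocal_X_pow_add_one {n : ℕ} (hn : n ≠ 0) :
    monicReciprocal (X ^ n + 1 : F[X]) = X ^ n + 1 := by
  have hX : (X ^ n : F[X]).reverse = 1 := by
    rw [← mul_one (X ^ n), reverse_X_pow_mul, ← C_1, reverse_C]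
  rw [monicReciprocal_apply, ← C_1, reverse_add_C, hX, natDegree_X_pow]
  simp [hn.symm, add_comm]

lemma aeval_inv_eq_zero_of_monicReciprocal_eq_self {K : Type*} [Field K] [Algebra F K]
    (hs : monicReciprocal f = f) {x : K} (hx0 : x ≠ 0) (hx : aeval x f = 0) :
    aeval x⁻¹ f = 0 := by
  have := invertibleOfNonzero hx0
  have hrev : aeval x⁻¹ f.reverse = 0 := by
    rw [← invOf_eq_inv x]
    exact (eval₂_reverse_eq_zero_iff (algebraMap F K) x f).mpr hx
  rw [← hs, monicReciprocal_apply, map_mul, hrev, mul_zero]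

end MonicReciprocal

section SelfDualGenerators

variable {F : Type*} [Field F]

/-- The divisors of `P` that are the monic reciprocal of their cofactor. For `P = X ^ n + 1` these
are the generator polynomials of the Euclidean self-dual negacyclic codes of length `n`. -/
def selfDualGenerators (P : F[X]) : Set F[X] :=
  {g | ∃ h, P = g * h ∧ g = monicReciprocal h}

section Family

variable {ι : Type*} [Fintype ι] {f : ι → F[X]} {σ : ι → ι}

lemma monicReciprocal_prod_pow (hσ : Involutive σ) (hfσ : ∀ i, monicReciprocal (f i) = f (σ i))
    (e : ι → ℕ) : monicReciprocal (∏ i, f i ^ e i) = ∏ i, f i ^ e (σ i) := by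
  simp only [map_prod, map_pow, hfσ]
  exact Fintype.prod_equiv hσ.toPerm _ _ fun i => by simp [hσ i]

lemma mem_selfDualGenerators_prod_pow_iff (hf : ∀ i, Prime (f i))
    (hrel : Pairwise (IsRelPrime on f)) (hσ : Involutive σ)
    (hfσ : ∀ i, monicReciprocal (f i) = f (σ i)) {N : ℕ} {g : F[X]} :
    g ∈ selfDualGenerators ((∏ i, f i) ^ N) ↔
      ∃ e : ι → Fin (N + 1), Semiconj e σ Fin.rev ∧ ∏ i, f i ^ (e i : ℕ) = g := by
  constructor
  · rintro ⟨h, hgh, hg⟩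
    rw [← Finset.prod_pow] at hgh
    obtain ⟨j, k, hjk, hgj, hhk⟩ :=
      exists_associated_prod_pow_of_mul_eq_prod_pow hf (fun _ => N) Finset.univ hgh.symm
    have hjk (i) : j i + k i = N := hjk i (Finset.mem_univ i)
    have hgk : g = ∏ i, f i ^ k (σ i) := by
      rw [hg, monicReciprocal_eq_of_associated hhk, monicReciprocal_prod_pow hσ hfσ]
    have hj : j = k ∘ σ := exponents_eq_of_associated_prod_pow hf hrel (hgj.symm.trans (.of_eq hgk))
    refine ⟨fun i => ⟨j i, by have := hjk i; omega⟩, fun i => Fin.ext ?_,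
      by simp only [hgk, hj, comp_apply]⟩
    have hki : j (σ i) = k i := by rw [hj, comp_apply, hσ i]
    have := hjk i
    simp only [Fin.val_rev]
    omega
  · rintro ⟨e, he, rfl⟩
    refine ⟨∏ i, f i ^ (e (σ i) : ℕ), ?_, ?_⟩
    · rw [← Finset.prod_pow, ← Finset.prod_mul_distrib]
      refine Finset.prod_congr rfl fun i _ => ?_
      rw [← pow_add, he i, Fin.val_rev]
      congr 1
      omega
    · rw [monicReciprocal_prod_pow hσ hfσ fun i => (e (σ i) : ℕ)]
      simp only [hσ _]

theorem ncard_selfDualGenerators_prod_pow (hf : ∀ i, Prime (f i))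
    (hrel : Pairwise (IsRelPrime on f)) (hσ : Involutive σ) (hfix : ∀ i, σ i ≠ i)
    (hfσ : ∀ i, monicReciprocal (f i) = f (σ i)) {t : ℕ} (ht : Nat.card ι = 2 * t) (N : ℕ) :
    (selfDualGenerators ((∏ i, f i) ^ N)).ncard = (N + 1) ^ t := by
  let Φ (e : {e : ι → Fin (N + 1) // Semiconj e σ Fin.rev}) : F[X] := ∏ i, f i ^ (e.1 i : ℕ)
  have hΦ : Injective Φ := fun d e hde => Subtype.ext <| funext fun i =>
    Fin.ext (congrFun (exponents_eq_of_associated_prod_pow hf hrel (.of_eq hde)) i)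
  have hrange : selfDualGenerators ((∏ i, f i) ^ N) = Set.range Φ := by
    ext g
    simp [mem_selfDualGenerators_prod_pow_iff hf hrel hσ hfσ, Φ]
  rw [hrange, ← Nat.card_coe_set_eq, Nat.card_range_of_injective hΦ,
    card_semiconj_involutive hσ hfix Fin.rev_involutive ht, Nat.card_fin]

end Family

lemma prod_primeFactors_eq_self [DecidableEq F] {P : F[X]} (hm : P.Monic) (hsq : Squarefree P) :
    ∏ f ∈ primeFactors P, f = P := by
  refine eq_of_monic_of_associated (monic_prod_of_monic _ _ fun f hf => ?_) hm
    (radical_associated hsq.isRadical hm.ne_zero)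
  exact ((Polynomial.mem_normalizedFactors_iff hm.ne_zero).mp (mem_primeFactors.mp hf)).2.1

lemma mem_primeFactors_iff [DecidableEq F] {f P : F[X]} (hP : P ≠ 0) :
    f ∈ primeFactors P ↔ Irreducible f ∧ f.Monic ∧ f ∣ P :=
  mem_primeFactors.trans (Polynomial.mem_normalizedFactors_iff hP)

lemma monicReciprocal_mem_primeFactors [DecidableEq F] {f P : F[X]} (hf : f ∈ primeFactors P)
    (hf0 : f.coeff 0 ≠ 0) (hP : monicReciprocal P = P) :
    monicReciprocal f ∈ primeFactors P := by
  rcases eq_or_ne P 0 with rfl | hP0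
  · simp at hf
  obtain ⟨hirr, -, hdvd⟩ := (mem_primeFactors_iff hP0).mp hf
  exact (mem_primeFactors_iff hP0).mpr ⟨irreducible_monicReciprocal hf0 hirr,
    monic_monicReciprocal hf0, (map_dvd monicReciprocal hdvd).trans hP.dvd⟩

theorem ncard_selfDualGenerators_pow [DecidableEq F] {P : F[X]} (hsq : Squarefree P)
    (hP : monicReciprocal P = P)
    (hfix : ∀ f, Irreducible f → f ∣ P → monicReciprocal f ≠ f) {t : ℕ}
    (ht : (primeFactors P).card = 2 * t) (N : ℕ) :
    (selfDualGenerators (P ^ N)).ncard = (N + 1) ^ t := by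
  have hP0 : P.coeff 0 ≠ 0 := fun h0 => hsq.ne_zero <| by
    rw [← hP, monicReciprocal_apply, h0, inv_zero, C_0, zero_mul]
  have hPm : P.Monic := by
    rw [← hP]
    exact monic_monicReciprocal hP0
  have hfac (f : primeFactors P) : Irreducible f.1 ∧ f.1.Monic ∧ f.1 ∣ P :=
    (mem_primeFactors_iff hsq.ne_zero).mp f.2
  have h0 (f : primeFactors P) : f.1.coeff 0 ≠ 0 :=
    ne_zero_of_dvd_ne_zero hP0 (map_dvd constantCoeff (hfac f).2.2)
  let σ (f : primeFactors P) : primeFactors P :=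
    ⟨monicReciprocal f.1, monicReciprocal_mem_primeFactors f.2 (h0 f) hP⟩
  have hσ : Involutive σ := fun f =>
    Subtype.ext (monicReciprocal_monicReciprocal (h0 f) (hfac f).2.1)
  have hσfix (f) : σ f ≠ f := fun h =>
    hfix f.1 (hfac f).1 (hfac f).2.2 (congrArg Subtype.val h)
  have hrel : Pairwise (IsRelPrime on ((↑) : primeFactors P → F[X])) := fun f g hfg =>
    pairwise_primeFactors_isRelPrime f.2 g.2 (Subtype.coe_ne_coe.mpr hfg)
  have hprod : ∏ f : primeFactors P, (f : F[X]) = P :=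
    (Finset.prod_coe_sort (primeFactors P) id).trans (prod_primeFactors_eq_self hPm hsq)
  have hcard : Nat.card (primeFactors P) = 2 * t := by
    rw [Nat.card_eq_fintype_card, Fintype.card_coe, ht]
  have := ncard_selfDualGenerators_prod_pow (fun f => (hfac f).1.prime) hrel hσ hσfix
    (fun _ => rfl) hcard N
  rwa [hprod] at this

end SelfDualGenerators

section FactorsOfXPowAddOne

lemma X_pow_add_one_eq_prod_cyclotomic (R : Type*) [CommRing R] {m : ℕ} (hm : Odd m) :
    (X : R[X]) ^ m + 1 = ∏ d ∈ m.divisors, cyclotomic (2 * d) R := by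
  have hexpand : (X : R[X]) ^ (2 * m) - 1 =
      (∏ d ∈ m.divisors, cyclotomic (2 * d) R) * (X ^ m - 1) := by
    have h := congrArg (expand R 2) (prod_cyclotomic_eq_X_pow_sub_one hm.pos R)
    rw [map_prod, map_sub, map_pow, expand_X, ← pow_mul, map_one] at h
    rw [← h, ← prod_cyclotomic_eq_X_pow_sub_one hm.pos R, ← Finset.prod_mul_distrib]
    refine Finset.prod_congr rfl fun d hd => ?_
    have hd : ¬ 2 ∣ d := (hm.of_dvd_nat (Nat.dvd_of_mem_divisors hd)).not_two_dvd_nat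
    rw [cyclotomic_expand_eq_cyclotomic_mul Nat.prime_two hd, mul_comm d]
  refine (monic_X_pow_sub_C (1 : R) hm.pos.ne').isRegular.right ?_
  simp only [C_1]
  rw [← hexpand]
  ring

lemma X_pow_two_pow_mul_add_one_eq_prod_cyclotomic (R : Type*) [CommRing R] {m : ℕ} (hm : Odd m)
    (k : ℕ) : (X : R[X]) ^ (2 ^ k * m) + 1 = ∏ d ∈ m.divisors, cyclotomic (2 ^ (k + 1) * d) R := by
  induction k with
  | zero => simpa using X_pow_add_one_eq_prod_cyclotomic R hm
  | succ k ih =>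
    have h := congrArg (expand R 2) ih
    rw [map_add, map_pow, expand_X, map_one, ← pow_mul, ← mul_assoc, ← pow_succ', map_prod] at h
    rw [h]
    refine Finset.prod_congr rfl fun d _ => ?_
    rw [cyclotomic_expand_eq_cyclotomic Nat.prime_two
      ((dvd_pow_self 2 k.succ_ne_zero).mul_right d), mul_right_comm, ← pow_succ]

lemma squarefree_X_pow_add_one {F : Type*} [Field F] {n : ℕ} (hn : (n : F) ≠ 0) :
    Squarefree (X ^ n + 1 : F[X]) := by
  have := (separable_X_pow_sub_C (-1) hn (neg_ne_zero.mpr one_ne_zero)).squarefree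
  rwa [C_neg, C_1, sub_neg_eq_add] at this

lemma card_primeFactors_cyclotomic {F : Type*} [Field F] [Finite F] [DecidableEq F] {n : ℕ}
    (hn : (n : F) ≠ 0) :
    (primeFactors (cyclotomic n F)).card = n.totient / orderOf (Nat.card F : ZMod n) := by
  have := Fintype.ofFinite F
  obtain ⟨p, _⟩ := CharP.exists F
  obtain ⟨l, hp, hl⟩ := FiniteField.card F p
  have := Fact.mk hp
  rw [Nat.card_eq_fintype_card, hl]
  have hpn : p.Coprime n :=
    hp.coprime_iff_not_dvd.mpr ((CharP.cast_eq_zero_iff F p n).not.mp hn)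
  rw [← toFinset_normalizedFactors, normalizedFactors_cyclotomic_card hl hpn, ← orderOf_units,
    ZMod.coe_unitOfCoprime]

lemma card_primeFactors_X_pow_two_pow_mul_add_one {F : Type*} [Field F] [Finite F] [DecidableEq F]
    (hF : ringChar F ≠ 2) {m : ℕ} (hm : Odd m) (hmF : (m : F) ≠ 0) (k : ℕ) :
    (primeFactors (X ^ (2 ^ k * m) + 1 : F[X])).card = ∑ d ∈ m.divisors,
      (2 ^ (k + 1) * d).totient / orderOf (Nat.card F : ZMod (2 ^ (k + 1) * d)) := by
  have hcast (j : ℕ) {d : ℕ} (hd : d ∣ m) : ((2 ^ j * d : ℕ) : F) ≠ 0 := by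
    push_cast
    exact mul_ne_zero (pow_ne_zero j (Ring.two_ne_zero hF))
      (ne_zero_of_dvd_ne_zero hmF (Nat.cast_dvd_cast hd))
  have hsq : Squarefree (X ^ (2 ^ k * m) + 1 : F[X]) :=
    squarefree_X_pow_add_one (hcast k dvd_rfl)
  rw [X_pow_two_pow_mul_add_one_eq_prod_cyclotomic F hm k] at hsq ⊢
  rw [card_primeFactors_prod hsq]
  exact Finset.sum_congr rfl fun d hd =>
    card_primeFactors_cyclotomic (hcast (k + 1) (Nat.dvd_of_mem_divisors hd))

end FactorsOfXPowAddOne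

section NoSelfReciprocalFactors

lemma two_pow_dvd_add_one_of_dvd_pow_add_one {q k i : ℕ} (hq : Odd q) (h : 2 ^ k ∣ q ^ i + 1) :
    2 ^ k ∣ q + 1 := by
  rcases Nat.even_or_odd' i with ⟨j, rfl | rfl⟩
  · have h4 : ¬ 2 ^ 2 ∣ q ^ (2 * j) + 1 := by
      obtain ⟨a, ha⟩ := hq.pow (n := j)
      rw [mul_comm, pow_mul, ha]
      ring_nf
      omega
    have hk : k ≤ 1 := by
      by_contra! hk
      exact h4 ((pow_dvd_pow 2 hk).trans h)
    exact (pow_dvd_pow 2 hk).trans (by simpa using hq.add_one.two_dvd)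
  · rcases k with _ | k
    · simp
    let u := ZMod.unitOfCoprime q (hq.coprime_two_right.pow_right (k + 1))
    have hu (n : ℕ) : u ^ n = -1 ↔ 2 ^ (k + 1) ∣ q ^ n + 1 := by
      rw [← ZMod.natCast_eq_zero_iff, Units.ext_iff, Units.val_neg, Units.val_one,
        eq_neg_iff_add_eq_zero]
      simp [u]
    have hord_i : orderOf u ∣ 2 * (2 * j + 1) := orderOf_dvd_of_pow_eq_one <| by
      rw [mul_comm, pow_mul, (hu _).mpr h, neg_one_sq]
    have hord_two : orderOf u ∣ 2 ^ k := orderOf_dvd_of_pow_eq_one <| by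
      simpa [Nat.totient_prime_pow_succ Nat.prime_two] using ZMod.pow_totient u
    have hsq : u ^ 2 = 1 := orderOf_dvd_iff_pow_eq_one.mp <|
      (Nat.Coprime.of_dvd_left hord_two
        ((odd_two_mul_add_one j).coprime_two_left.pow_left k)).dvd_of_dvd_mul_right hord_i
    have hneg : u ^ (2 * j + 1) = u ^ 1 := by
      rw [pow_add u, pow_mul u, hsq, one_pow, one_mul]
    simpa using (hu 1).mp (hneg.symm.trans ((hu _).mpr h))

lemma two_pow_dvd_add_one_of_pow_eq_inv {K : Type*} [Field K] (hK : ringChar K ≠ 2) {k m a : ℕ}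
    {x : K} (hx0 : x ≠ 0) (hx : x ^ (2 ^ k * m) = -1) (hinv : x ^ a = x⁻¹) :
    2 ^ (k + 1) ∣ a + 1 := by
  rw [mul_comm, pow_mul] at hx
  have hord : orderOf (x ^ m) = 2 ^ (k + 1) := by
    refine orderOf_eq_prime_pow ?_ ?_
    · rw [hx]
      exact Ring.neg_one_ne_one_of_char_ne_two hK
    · rw [pow_succ, pow_mul, hx, neg_one_sq]
  rw [← hord]
  refine orderOf_dvd_of_pow_eq_one ?_
  rw [pow_right_comm, pow_succ, hinv, inv_mul_cancel₀ hx0, one_pow]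

lemma exists_pow_card_pow_eq_of_isConjRoot {F K : Type*} [Field F] [Field K] [Finite K]
    [Algebra F K] {x y : K} (h : IsConjRoot F x y) : ∃ i, x ^ Nat.card F ^ i = y := by
  have := Finite.of_injective _ (algebraMap F K).injective
  have := Fintype.ofFinite F
  obtain ⟨σ, rfl⟩ := h.symm.exists_algEquiv
  obtain ⟨i, rfl⟩ := (FiniteField.bijective_frobeniusAlgEquivOfAlgebraic_pow F K).surjective σ
  refine ⟨i, ?_⟩
  rw [AlgEquiv.coe_pow, FiniteField.coe_frobeniusAlgEquivOfAlgebraic_iterate,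
    Nat.card_eq_fintype_card]

lemma monicReciprocal_ne_self {F : Type*} [Field F] [Finite F] (hF : ringChar F ≠ 2) {k m : ℕ}
    (hne : ¬ 2 ^ (k + 1) ∣ Nat.card F + 1) {f : F[X]} (hi : Irreducible f)
    (hf : f ∣ X ^ (2 ^ k * m) + 1) : monicReciprocal f ≠ f := by
  intro hs
  have := Fact.mk hi
  have := Fintype.ofFinite F
  have : Module.Finite F (AdjoinRoot f) := (AdjoinRoot.powerBasis hi.ne_zero).finite
  have : Finite (AdjoinRoot f) := Module.finite_of_finite F
  have hK : ringChar (AdjoinRoot f) ≠ 2 := Algebra.ringChar_eq F (AdjoinRoot f) ▸ hF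
  have hq : Odd (Nat.card F) := by
    rw [Nat.card_eq_fintype_card, Nat.odd_iff]
    exact FiniteField.odd_card_of_char_ne_two hF
  set x := AdjoinRoot.root f
  have hroot : aeval x f = 0 := by rw [AdjoinRoot.aeval_eq, AdjoinRoot.mk_self]
  have hx : x ^ (2 ^ k * m) = -1 := by
    have := aeval_eq_zero_of_dvd_aeval_eq_zero hf hroot
    rw [map_add, map_pow, aeval_X, map_one] at this
    exact eq_neg_of_add_eq_zero_left this
  have hx0 : x ≠ 0 := by
    rintro h0
    rw [h0] at hx
    rcases eq_or_ne (2 ^ k * m) 0 with hn | hn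
    · rw [hn, pow_zero] at hx
      exact Ring.neg_one_ne_one_of_char_ne_two hK hx.symm
    · simp [hn] at hx
  have hconj : IsConjRoot F x x⁻¹ := by
    refine isConjRoot_of_aeval_eq_zero (Algebra.IsIntegral.isIntegral x) ?_
    rw [← minpoly.eq_of_irreducible hi hroot, map_mul,
      aeval_inv_eq_zero_of_monicReciprocal_eq_self hs hx0 hroot, zero_mul]
  obtain ⟨i, hxi⟩ := exists_pow_card_pow_eq_of_isConjRoot hconj
  exact hne <| two_pow_dvd_add_one_of_dvd_pow_add_one hq <|
    two_pow_dvd_add_one_of_pow_eq_inv hK hx0 hx hxi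

end NoSelfReciprocalFactors

theorem card_euclidean_selfDual_negacyclic_general {F : Type*} [Field F] [Finite F] (p : ℕ)
    [CharP F p] (hodd : Odd p) (ν r n' : ℕ) (hn'o : Odd n') (hpn' : ¬ p ∣ n')
    (hne : ¬ 2 ^ (ν + 1) ∣ Nat.card F + 1) (t : ℕ)
    (ht : 2 * t = ∑ d ∈ n'.divisors,
        (2 ^ (ν + 1) * d).totient / orderOf (Nat.card F : ZMod (2 ^ (ν + 1) * d))) :
    (selfDualGenerators (X ^ (2 ^ ν * p ^ r * n') + 1 : F[X])).ncard = (p ^ r + 1) ^ t := by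
  classical
  have hp : Fact p.Prime := ⟨CharP.char_is_prime F p⟩
  have hF : ringChar F ≠ 2 := by
    rw [ringChar.eq F p]
    rintro rfl
    exact absurd hodd (by decide)
  have hn'F : (n' : F) ≠ 0 := (CharP.cast_eq_zero_iff F p n').not.mpr hpn'
  have hcast : ((2 ^ ν * n' : ℕ) : F) ≠ 0 := by
    push_cast
    exact mul_ne_zero (pow_ne_zero ν (Ring.two_ne_zero hF)) hn'F
  have hpow : (X ^ (2 ^ ν * p ^ r * n') + 1 : F[X]) = (X ^ (2 ^ ν * n') + 1) ^ p ^ r := by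
    rw [add_pow_char_pow, one_pow, ← pow_mul, mul_right_comm]
  rw [hpow]
  exact ncard_selfDualGenerators_pow (squarefree_X_pow_add_one hcast)
    (monicReciprocal_X_pow_add_one fun h => hcast (by rw [h, Nat.cast_zero]))
    (fun f hi hf => monicReciprocal_ne_self hF hne hi hf)
    ((card_primeFactors_X_pow_two_pow_mul_add_one hF hn'o hn'F ν).trans ht.symm) (p ^ r)

/-- Enumeration of Euclidean self-dual negacyclic codes of length `n = 2^ν·p^r·n′` over
the field `F` with `p^l` elements: if `2^(ν+1) ∤ p^l + 1`, then the number of generator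
polynomials `g` with `X^n + 1 = g·h` and `g = h*` equals `(p^r + 1)^t`, where
`2t = ∑_{d ∣ n′} φ(2^(ν+1)·d) / ord_{2^(ν+1)·d}(p^l)`. -/
theorem card_euclidean_selfDual_negacyclic
    (p : ℕ) [hp : Fact p.Prime] (hodd : Odd p) (l : ℕ) (hl : 0 < l)
    (ν r n' : ℕ) (hν : 1 ≤ ν) (hn' : 0 < n') (hn'o : Odd n') (hpn' : ¬ p ∣ n')
    (hne : ¬ 2 ^ (ν + 1) ∣ p ^ l + 1) (t : ℕ)
    (ht : 2 * t = ∑ d ∈ n'.divisors,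
        (2 ^ (ν + 1) * d).totient / orderOf (((p ^ l : ℕ) : ZMod (2 ^ (ν + 1) * d)))) :
    Set.ncard {g : Polynomial (GaloisField p l) |
        ∃ h : Polynomial (GaloisField p l),
          (X : Polynomial (GaloisField p l)) ^ (2 ^ ν * p ^ r * n') + 1 = g * h ∧
            g = Polynomial.C (h.coeff 0)⁻¹ * h.reverse} = (p ^ r + 1) ^ t := by
  rw [← GaloisField.card p l hl.ne'] at hne ht
  exact card_euclidean_selfDual_negacyclic_general p hodd ν r n' hn'o hpn' hne t ht
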